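/- arXiv:1707.05216 — 2 statements merged into one kernel-verified Lean document; each statement's English description precedes it below -/
import Mathlib

section
/- Define η_{mν} = ∫₀¹ t · J_ν(q·j_{mν}·t;q²)² d_q t for m = 1, 2, 3, …. Then η_{mν} = O(q^{2m}) as m → ∞; that is, there exist C > 0 and M ∈ ℕ such that 0 ≤ η_{mν} ≤ C·q^{2m} for all integers m ≥ M. -/
/-!
Write `J_ν(z;q²) = A z^ν φ(z²)` with `φ` an entire power series, and put `p = q²`, `β = q^{2ν}`,
`b = p β = q^{2ν+2} < 1`. The coefficient recurrence is equivalent to the functional equation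
`φ(w) = (1 + β - p w) φ(p w) - β φ(p² w)` (`powSer_functional_eq`). The theorem follows from two
consequences of this equation.

* `η_m = O(1 / j_m²)`. Starting from a zero `w = j_m²`, the three-term recurrence satisfied by
  `a_n = φ(pⁿ w)` forces `|a_{n+1}| ≥ K |a_n|` as long as `pⁿ w` exceeds a threshold depending on
  `K` (`growth`). Hence the summands `(pⁿ w)^{1+ν} a_n²` at least double until `pⁿ w` enters a fixed
  bounded interval, after which they are dominated by a geometric series of ratio `b`. Their sum is
  therefore bounded uniformly in the zero `w` (`weighted_sum_bound`), and up to the factor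
  `A² / (q² j_m²)` it dominates the q-integral (`qInt_bound`).

* `j_m² ≥ p^{-(m-1)} j_1²`. The Wronskian `W(w) = φ'(w) φ(p w) - p φ(w) φ'(p w)` satisfies
  `W(w) = -p φ(p w)² + b W(p w)` and is negative near `0`, hence everywhere (`wronskian_neg`).
  So between two consecutive zeros of `φ` there is a zero of `φ(p ·)`
  (`exists_scaled_zero_between`), which gives `j_{k+1}² ≥ j_k² / p` (`zeros_geometric`).
-/

open Filter

/-- The finite q-shifted factorial `(a;q)_n`. -/
noncomputable def qPoch (a q : ℝ) : ℕ → ℝ := fun n => ∏ j ∈ Finset.range n, (1 - a * q ^ j)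

/-- The infinite q-shifted factorial `(a;q)_∞`. -/
noncomputable def qPochInf (a q : ℝ) : ℝ := ∏' j : ℕ, (1 - a * q ^ j)

/-- The third Jackson (Hahn–Exton) q-Bessel function `J_ν(z;q²)` (base `q²`). -/
noncomputable def qBessel (ν q z : ℝ) : ℝ :=
  z ^ ν * (qPochInf (q ^ (2 * (ν + 1))) (q ^ 2) / qPochInf (q ^ 2) (q ^ 2)) *
    ∑' k : ℕ, ((-1 : ℝ) ^ k * q ^ (k * (k + 1)) * z ^ (2 * k) /
      (qPoch (q ^ (2 * (ν + 1))) (q ^ 2) k * qPoch (q ^ 2) (q ^ 2) k))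

/-- The Thomae–Jackson q-integral of `g` over `[0,1]`. -/
noncomputable def qInt (q : ℝ) (g : ℝ → ℝ) : ℝ := (1 - q) * ∑' n : ℕ, g (q ^ n) * q ^ n

/-! ### The power series and its functional equation -/

/-- The power series `∑ c k * w ^ k`; for the coefficients of the Hahn–Exton function it satisfies
`J_ν(z;q²) = const * z ^ ν * powSer c (z ^ 2)`. -/
noncomputable def powSer (c : ℕ → ℝ) (w : ℝ) : ℝ := ∑' k : ℕ, c k * w ^ k

lemma one_sub_mul_pow_pos {p b : ℝ} (hp0 : 0 < p) (hp1 : p < 1) (hb0 : 0 < b) (hb1 : b < 1)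
    (k : ℕ) : 0 < 1 - b * p ^ k := by
  have h1 : p ^ k ≤ 1 := pow_le_one₀ hp0.le hp1.le
  nlinarith [pow_pos hp0 k]

/-- The two-factor recurrence makes the ratio of consecutive coefficients tend to `0`, so the
power series is entire. -/
lemma powSer_entire {p b : ℝ} (hp0 : 0 < p) (hp1 : p < 1) (hb0 : 0 < b) (hb1 : b < 1)
    {c : ℕ → ℝ} (hc0 : c 0 = 1)
    (hc : ∀ k, c (k + 1) * ((1 - b * p ^ k) * (1 - p * p ^ k)) = -(p * p ^ k) * c k) :
    ContDiff ℝ 1 (powSer c) ∧ ∀ w, Summable fun k => c k * w ^ k := by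
  have hpos : ∀ k, 0 < (1 - b * p ^ k) * (1 - p * p ^ k) := fun k =>
    mul_pos (one_sub_mul_pow_pos hp0 hp1 hb0 hb1 k) (one_sub_mul_pow_pos hp0 hp1 hp0 hp1 k)
  have hne : ∀ k, c k ≠ 0 := by
    intro k
    induction k with
    | zero => simp [hc0]
    | succ k ih =>
      intro h
      have h1 := hc k
      rw [h, zero_mul] at h1
      have : p * p ^ k ≠ 0 := (mul_pos hp0 (pow_pos hp0 k)).ne'
      simp_all
  have hpk : Tendsto (fun k : ℕ => p ^ k) atTop (nhds 0) :=
    tendsto_pow_atTop_nhds_zero_of_lt_one hp0.le hp1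
  have hratio : Tendsto (fun k : ℕ => ‖c k.succ‖ / ‖c k‖) atTop (nhds 0) := by
    have h1 : Tendsto (fun k : ℕ => p * p ^ k / ((1 - b * p ^ k) * (1 - p * p ^ k))) atTop
        (nhds (p * 0 / ((1 - b * 0) * (1 - p * 0)))) := by
      refine Tendsto.div (hpk.const_mul p) (Tendsto.mul ?_ ?_) (by norm_num)
      · exact (hpk.const_mul b).const_sub 1
      · exact (hpk.const_mul p).const_sub 1
    simp only [mul_zero, zero_div] at h1
    refine h1.congr fun k => ?_
    have h2 : c (k + 1) = -(p * p ^ k) * c k / ((1 - b * p ^ k) * (1 - p * p ^ k)) := by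
      rw [eq_div_iff (hpos k).ne', hc k]
    have h3 : ‖c k‖ ≠ 0 := norm_ne_zero_iff.2 (hne k)
    rw [Nat.succ_eq_add_one, h2, norm_div, norm_mul, norm_neg,
      Real.norm_of_nonneg (hpos k).le, Real.norm_of_nonneg (mul_pos hp0 (pow_pos hp0 k)).le]
    field_simp
  have hrad := FormalMultilinearSeries.ofScalars_radius_eq_top_of_tendsto ℝ c
    (Eventually.of_forall hne) hratio
  have hball := (FormalMultilinearSeries.ofScalars ℝ c).hasFPowerSeriesOnBall (by simp [hrad])
  rw [hrad] at hball
  have heq : (FormalMultilinearSeries.ofScalars ℝ c).sum = powSer c := by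
    funext w
    exact FormalMultilinearSeries.ofScalars_sum_eq (E := ℝ) c w
  refine ⟨?_, fun w => ?_⟩
  · rw [← heq]
    refine AnalyticOnNhd.contDiff ?_
    simpa using hball.analyticOnNhd
  · have h := (hball.hasSum (y := w) (by simp)).summable
    simpa [FormalMultilinearSeries.ofScalars_apply_eq, mul_comm] using h

lemma powSer_functional_eq {p b β : ℝ} (hbβ : b = p * β)
    {c : ℕ → ℝ}
    (hc : ∀ k, c (k + 1) * ((1 - b * p ^ k) * (1 - p * p ^ k)) = -(p * p ^ k) * c k)
    (hs : ∀ w, Summable fun k => c k * w ^ k) (w : ℝ) :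
    powSer c w = (1 + β - p * w) * powSer c (p * w) - β * powSer c (p * (p * w)) := by
  have e0 := (hs w).hasSum
  have e1 := (hs (p * w)).hasSum
  have e2 := (hs (p * (p * w))).hasSum
  have hL := (e0.sub (e1.mul_left (1 + β))).add (e2.mul_left β)
  have hR := e1.mul_left (-(p * w))
  have hR' : HasSum (fun k => c k * w ^ k - (1 + β) * (c k * (p * w) ^ k)
      + β * (c k * (p * (p * w)) ^ k)) (-(p * w) * ∑' k, c k * (p * w) ^ k) := by
    rw [← hasSum_nat_add_iff' 1]
    simp only [Finset.range_one, Finset.sum_singleton, pow_zero]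
    have hval : -(p * w) * ∑' k, c k * (p * w) ^ k
        - (c 0 * 1 - (1 + β) * (c 0 * 1) + β * (c 0 * 1))
        = -(p * w) * ∑' k, c k * (p * w) ^ k := by ring
    rw [hval]
    refine hR.congr_fun fun k => ?_
    have := hc k
    rw [hbβ] at this
    simp only [mul_pow, pow_succ]
    linear_combination (w ^ k * w) * this
  have := hL.unique hR'
  simp only [powSer]
  linarith

/-! ### Sturm-type separation of zeros -/

lemma hasDerivAt_scaled {p d w : ℝ} {f : ℝ → ℝ} (h : HasDerivAt f d (p * w)) :
    HasDerivAt (fun x => f (p * x)) (p * d) w := by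
  have h1 : HasDerivAt (fun x : ℝ => p * x) p w := by
    simpa using (hasDerivAt_id w).const_mul p
  rw [mul_comm p d]
  exact HasDerivAt.comp w h h1

/-- The Wronskian of `φ w` and `φ (p * w)` is negative: the functional equation gives
`W w = -p * φ (p * w) ^ 2 + b * W (p * w)`, and `W` is negative near `0`. -/
lemma wronskian_neg {p b β : ℝ} (hp0 : 0 < p) (hp1 : p < 1) (hb0 : 0 < b) (hb1 : b < 1)
    (hbβ : b = p * β) {φ : ℝ → ℝ} (hφ : ContDiff ℝ 1 φ) (hφ0 : φ 0 = 1)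
    (hfe : ∀ w, φ w = (1 + β - p * w) * φ (p * w) - β * φ (p * (p * w))) (w : ℝ) :
    deriv φ w * φ (p * w) - p * φ w * deriv φ (p * w) < 0 := by
  have hd : ∀ w, HasDerivAt φ (deriv φ w) w := fun w =>
    (hφ.differentiable (by norm_num) w).hasDerivAt
  have hd1 : ∀ w, HasDerivAt (fun w => φ (p * w)) (p * deriv φ (p * w)) w := fun w =>
    hasDerivAt_scaled (hd (p * w))
  have hd2 : ∀ w, HasDerivAt (fun w => φ (p * (p * w))) (p * (p * deriv φ (p * (p * w)))) w :=
    fun w => hasDerivAt_scaled (hd1 (p * w))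
  have hder : ∀ w, deriv φ w = -p * φ (p * w) + (1 + β - p * w) * (p * deriv φ (p * w))
      - β * (p * (p * deriv φ (p * (p * w)))) := by
    intro w
    have h1 : HasDerivAt (fun w : ℝ => 1 + β - p * w) (-p) w := by
      simpa using ((hasDerivAt_id w).const_mul p).const_sub (1 + β)
    have h2 := (h1.mul (hd1 w)).sub ((hd2 w).const_mul β)
    have h3 : φ = (fun w : ℝ => 1 + β - p * w) * (fun w => φ (p * w))
        - (fun w => β * φ (p * (p * w))) := by
      funext w
      simpa using hfe w
    have h4 := h2.deriv
    rw [← h3] at h4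
    exact h4
  set W : ℝ → ℝ := fun w => deriv φ w * φ (p * w) - p * φ w * deriv φ (p * w) with hW
  have hrec : ∀ w, W w = -p * φ (p * w) ^ 2 + b * W (p * w) := by
    intro w
    simp only [hW]
    rw [hder w, hfe w, hbβ]
    ring
  have hcont : Continuous W := by
    have h1 := hφ.continuous_deriv (le_refl 1)
    have h2 := hφ.continuous
    fun_prop
  have hW0 : W 0 < 0 := by
    have h := hrec 0
    rw [mul_zero, hφ0] at h
    nlinarith
  have hneg : ∀ n : ℕ, ∀ w, W (p ^ n * w) < 0 → W w < 0 := by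
    intro n
    induction n with
    | zero => intro w h; simpa using h
    | succ n ih =>
      intro w h
      have h1 : W (p * w) < 0 := ih (p * w) (by rwa [pow_succ, mul_assoc] at h)
      rw [hrec w]
      nlinarith [sq_nonneg (φ (p * w))]
  have hlim : Tendsto (fun n : ℕ => W (p ^ n * w)) atTop (nhds (W 0)) := by
    have h1 := (tendsto_pow_atTop_nhds_zero_of_lt_one hp0.le hp1).mul_const w
    rw [zero_mul] at h1
    exact (hcont.tendsto 0).comp h1
  obtain ⟨n, hn⟩ := (hlim.eventually_lt_const hW0).exists
  exact hneg n w hn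

/-- Between two zeros of `φ` lies a zero of `w ↦ φ (p * w)`: otherwise the quotient of the two
functions would be strictly decreasing there while vanishing at both ends. -/
lemma exists_scaled_zero_between {p : ℝ} {φ : ℝ → ℝ} (hφ : ContDiff ℝ 1 φ)
    (hW : ∀ w, deriv φ w * φ (p * w) - p * φ w * deriv φ (p * w) < 0)
    {u v : ℝ} (huv : u < v) (hu : φ u = 0) (hv : φ v = 0) :
    ∃ x, u < x ∧ x < v ∧ φ (p * x) = 0 := by
  by_contra! hno
  have hne : ∀ x ∈ Set.Icc u v, φ (p * x) ≠ 0 := by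
    intro x hx h0
    have hWx := hW x
    rcases eq_or_lt_of_le hx.1 with h | h
    · rw [← h] at hWx h0; simp [hu, h0] at hWx
    rcases eq_or_lt_of_le hx.2 with h' | h'
    · rw [h'] at hWx h0; simp [hv, h0] at hWx
    exact hno x h h' h0
  have hd : ∀ w, HasDerivAt φ (deriv φ w) w := fun w =>
    (hφ.differentiable (by norm_num) w).hasDerivAt
  have hd1 : ∀ w, HasDerivAt (fun w => φ (p * w)) (p * deriv φ (p * w)) w := fun w =>
    hasDerivAt_scaled (hd (p * w))
  have hq : ∀ x ∈ Set.Icc u v, HasDerivAt (fun w => φ w / φ (p * w))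
      ((deriv φ x * φ (p * x) - φ x * (p * deriv φ (p * x))) / φ (p * x) ^ 2) x :=
    fun x hx => (hd x).div (hd1 x) (hne x hx)
  have hanti : StrictAntiOn (fun w => φ w / φ (p * w)) (Set.Icc u v) := by
    refine strictAntiOn_of_deriv_neg (convex_Icc u v)
      (fun x hx => (hq x hx).continuousAt.continuousWithinAt) fun x hx => ?_
    have hx' := interior_subset hx
    rw [(hq x hx').deriv]
    refine div_neg_of_neg_of_pos ?_ (pow_pos (abs_pos.2 (hne x hx')) 2 |>.trans_eq (sq_abs _))
    have := hW x
    linarith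
  have := hanti (Set.left_mem_Icc.2 huv.le) (Set.right_mem_Icc.2 huv.le) huv
  simp [hu, hv] at this

/-- Consecutive zeros are separated by at least the factor `1 / p`. The zero index `l k` with
`z k < z (l k) / p < z (k + 1)` is strictly increasing in `k`, hence `k ≤ l k`. -/
lemma zeros_geometric {p : ℝ} (hp0 : 0 < p) {φ : ℝ → ℝ} (hφ : ContDiff ℝ 1 φ)
    (hW : ∀ w, deriv φ w * φ (p * w) - p * φ w * deriv φ (p * w) < 0)
    {z : ℕ → ℝ} (hz0 : ∀ k, 0 < z k) (hz : ∀ k, φ (z k) = 0) (hmono : StrictMono z)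
    (hall : ∀ x, 0 < x → φ x = 0 → ∃ k, x = z k) (m : ℕ) :
    z 0 ≤ p ^ m * z m := by
  have hex : ∀ k, ∃ l, z k < z l / p ∧ z l / p < z (k + 1) := by
    intro k
    obtain ⟨x, h1, h2, h3⟩ := exists_scaled_zero_between hφ hW (hmono (Nat.lt_succ_self k))
      (hz k) (hz (k + 1))
    obtain ⟨l, hl⟩ := hall (p * x) (mul_pos hp0 ((hz0 k).trans h1)) h3
    refine ⟨l, ?_⟩
    rw [← hl, mul_div_cancel_left₀ _ hp0.ne']
    exact ⟨h1, h2⟩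
  choose l hl1 hl2 using hex
  have hlmono : StrictMono l := strictMono_nat_of_lt_succ fun k => by
    have := (hl2 k).trans (hl1 (k + 1))
    rw [div_lt_div_iff_of_pos_right hp0] at this
    exact hmono.lt_iff_lt.1 this
  induction m with
  | zero => simp
  | succ m ih =>
    have h1 : z m ≤ z (l m) := hmono.monotone (hlmono.id_le m)
    have h2 := hl2 m
    rw [div_lt_iff₀ hp0] at h2
    calc z 0 ≤ p ^ m * z m := ih
      _ ≤ p ^ m * (z (m + 1) * p) := by
        have := pow_pos hp0 m
        gcongr
        linarith
      _ = p ^ (m + 1) * z (m + 1) := by ring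

/-! ### Uniform bound for the weighted sum along a geometric sequence -/

/-- Starting from a zero `w` of `φ`, the values `φ (p ^ n * w)` grow at least by the factor `K` per
step as long as `p ^ n * w` stays above the threshold `2 + β + β * K`. -/
lemma growth {p β K : ℝ} (hp0 : 0 < p) (hp1 : p < 1) (hβ : 0 < β) (hK : 1 ≤ K) {φ : ℝ → ℝ}
    (hfe : ∀ w, φ w = (1 + β - p * w) * φ (p * w) - β * φ (p * (p * w)))
    {w : ℝ} (hw0 : 0 < w) (hw : φ w = 0) (n : ℕ) (hn : 2 + β + β * K ≤ p ^ n * w) :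
    K * |φ (p ^ n * w)| ≤ |φ (p ^ (n + 1) * w)| := by
  induction n with
  | zero => simp [hw]
  | succ n ih =>
    have hs : p ^ (n + 1) * w ≤ p ^ n * w := by
      have := pow_le_pow_of_le_one hp0.le hp1.le (Nat.le_succ n)
      gcongr
    have ih' := ih (hn.trans hs)
    have h := hfe (p ^ n * w)
    rw [show p * (p ^ n * w) = p ^ (n + 1) * w by ring,
      show p * (p ^ (n + 1) * w) = p ^ (n + 1 + 1) * w by ring] at h
    set a := φ (p ^ n * w)
    set a1 := φ (p ^ (n + 1) * w)
    set a2 := φ (p ^ (n + 1 + 1) * w)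
    set s := p ^ (n + 1) * w
    have h1 : (s - 1 - β) * a1 = -a - β * a2 := by linarith
    have h2 : (s - 1 - β) * |a1| ≤ |a| + β * |a2| := by
      have h3 : 0 ≤ s - 1 - β := by nlinarith
      rw [← abs_of_nonneg h3, ← abs_mul, h1]
      calc |-a - β * a2| ≤ |-a| + |β * a2| := abs_sub _ _
        _ = |a| + β * |a2| := by rw [abs_neg, abs_mul, abs_of_pos hβ]
    have h4 : |a| ≤ |a1| := by nlinarith [abs_nonneg a]
    have h5 : β * (K * |a1|) ≤ β * |a2| := by nlinarith [abs_nonneg a1]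
    exact le_of_mul_le_mul_left h5 hβ

/-- The sums `∑ (p ^ n * w) ^ (1 + ν) * φ (p ^ n * w) ^ 2` over the zeros `w` of `φ` are uniformly
bounded. -/
lemma weighted_sum_bound {p b β ν : ℝ} (hp0 : 0 < p) (hp1 : p < 1) (hb : b = p ^ (1 + ν))
    (hν : -1 < ν) (hbβ : b = p * β) {φ : ℝ → ℝ} (hφ : Continuous φ)
    (hfe : ∀ w, φ w = (1 + β - p * w) * φ (p * w) - β * φ (p * (p * w))) :
    ∃ E : ℝ, 0 < E ∧ ∀ w, 0 < w → φ w = 0 → ∀ n : ℕ,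
      ∑ i ∈ Finset.range n, (p ^ i * w) ^ (1 + ν) * φ (p ^ i * w) ^ 2 ≤ E := by
  have hν' : 0 < 1 + ν := by linarith
  have hb0 : 0 < b := hb ▸ Real.rpow_pos_of_pos hp0 _
  have hb1 : b < 1 := hb ▸ Real.rpow_lt_one hp0.le hp1 hν'
  have hβ : 0 < β := by
    rw [hbβ] at hb0
    exact pos_of_mul_pos_right hb0 hp0.le
  -- `K` is chosen so that `b * K ^ 2 ≥ 2`: above the threshold the summands at least double.
  set K : ℝ := 2 / b with hKdef
  have hbK : b * K = 2 := by rw [hKdef]; field_simp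
  have hK : 1 ≤ K := by nlinarith
  set T : ℝ := 2 + β + β * K with hT
  have hT0 : 0 < T := by positivity
  obtain ⟨B, hB⟩ := (isCompact_Icc (a := (0 : ℝ)) (b := T)).exists_bound_of_continuousOn
    hφ.continuousOn
  set G : ℝ := B ^ 2 * T ^ (1 + ν) with hG
  have hG0 : 0 ≤ G := by positivity
  refine ⟨G + G / (1 - b) + 1, by have : 0 < 1 - b := by linarith
                                  positivity, fun w hw0 hw n => ?_⟩
  set t : ℕ → ℝ := fun i => (p ^ i * w) ^ (1 + ν) * φ (p ^ i * w) ^ 2 with ht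
  have hs0 : ∀ i, 0 < p ^ i * w := fun i => mul_pos (pow_pos hp0 i) hw0
  have ht0 : ∀ i, 0 ≤ t i := fun i =>
    mul_nonneg (Real.rpow_nonneg (hs0 i).le _) (sq_nonneg _)
  have hstep : ∀ i, (p ^ (i + 1) * w) ^ (1 + ν) = b * (p ^ i * w) ^ (1 + ν) := by
    intro i
    rw [hb, ← Real.mul_rpow hp0.le (hs0 i).le]
    congr 1
    ring
  have hgrow : ∀ i, T ≤ p ^ i * w → 2 * t i ≤ t (i + 1) := by
    intro i hi
    have h := growth hp0 hp1 hβ hK hfe hw0 hw i hi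
    have h2 : K ^ 2 * φ (p ^ i * w) ^ 2 ≤ φ (p ^ (i + 1) * w) ^ 2 := by
      rw [← sq_abs (φ (p ^ i * w)), ← sq_abs (φ (p ^ (i + 1) * w)), ← mul_pow]
      exact pow_le_pow_left₀ (by positivity) h 2
    simp only [ht]
    rw [hstep i]
    have hr := Real.rpow_nonneg (hs0 i).le (1 + ν)
    have h3 : 2 * φ (p ^ i * w) ^ 2 ≤ b * φ (p ^ (i + 1) * w) ^ 2 := by
      have h4 : b * (K ^ 2 * φ (p ^ i * w) ^ 2) ≤ b * φ (p ^ (i + 1) * w) ^ 2 := by gcongr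
      have h5 : b * (K ^ 2 * φ (p ^ i * w) ^ 2) = 2 * (K * φ (p ^ i * w) ^ 2) := by
        rw [← hbK]; ring
      nlinarith [sq_nonneg (φ (p ^ i * w))]
    calc 2 * ((p ^ i * w) ^ (1 + ν) * φ (p ^ i * w) ^ 2)
        = (p ^ i * w) ^ (1 + ν) * (2 * φ (p ^ i * w) ^ 2) := by ring
      _ ≤ (p ^ i * w) ^ (1 + ν) * (b * φ (p ^ (i + 1) * w) ^ 2) := by gcongr
      _ = _ := by ring
  have hex : ∃ N : ℕ, p ^ N * w < T := by
    have h1 := (tendsto_pow_atTop_nhds_zero_of_lt_one hp0.le hp1).mul_const w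
    rw [zero_mul] at h1
    exact (h1.eventually_lt_const hT0).exists
  classical
  set N := Nat.find hex
  have hNspec : p ^ N * w < T := Nat.find_spec hex
  have hNmin : ∀ i, i < N → T ≤ p ^ i * w := fun i hi => not_lt.1 (Nat.find_min hex hi)
  have hbefore : ∀ n, n ≤ N → ∑ i ∈ Finset.range n, t i ≤ t n := by
    intro n
    induction n with
    | zero => intro _; simpa using ht0 0
    | succ n ih =>
      intro hn
      rw [Finset.sum_range_succ]
      have := hgrow n (hNmin n hn)
      have := ih (Nat.le_of_succ_le hn)
      linarith
  have hsmall : ∀ k, t (N + k) ≤ b ^ k * G := by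
    intro k
    have h1 : (p ^ (N + k) * w) ^ (1 + ν) ≤ b ^ k * T ^ (1 + ν) := by
      induction k with
      | zero =>
        simpa using Real.rpow_le_rpow (hs0 N).le hNspec.le hν'.le
      | succ k ih =>
        rw [← add_assoc, hstep, pow_succ]
        nlinarith
    have h2 : p ^ (N + k) * w ≤ T := by
      have : p ^ (N + k) ≤ p ^ N := pow_le_pow_of_le_one hp0.le hp1.le (Nat.le_add_right N k)
      nlinarith
    have h3 : φ (p ^ (N + k) * w) ^ 2 ≤ B ^ 2 := by
      rw [← sq_abs]
      exact pow_le_pow_left₀ (abs_nonneg _) (hB _ ⟨(hs0 _).le, h2⟩) 2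
    calc t (N + k) ≤ (b ^ k * T ^ (1 + ν)) * B ^ 2 :=
          mul_le_mul h1 h3 (sq_nonneg _) (by positivity)
      _ = b ^ k * G := by rw [hG]; ring
  have htail : ∀ k, ∑ i ∈ Finset.range k, t (N + i) ≤ G / (1 - b) := by
    intro k
    have hgeo := summable_geometric_of_lt_one hb0.le hb1
    calc ∑ i ∈ Finset.range k, t (N + i) ≤ ∑ i ∈ Finset.range k, b ^ i * G :=
          Finset.sum_le_sum fun i _ => hsmall i
      _ = (∑ i ∈ Finset.range k, b ^ i) * G := by rw [Finset.sum_mul]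
      _ ≤ (1 - b)⁻¹ * G := by
          gcongr
          rw [← tsum_geometric_of_lt_one hb0.le hb1]
          exact hgeo.sum_le_tsum _ fun i _ => by positivity
      _ = G / (1 - b) := by ring
  calc ∑ i ∈ Finset.range n, t i ≤ ∑ i ∈ Finset.range (N + n), t i :=
        Finset.sum_le_sum_of_subset_of_nonneg (Finset.range_mono (Nat.le_add_left n N))
          fun i _ _ => ht0 i
    _ = ∑ i ∈ Finset.range N, t i + ∑ i ∈ Finset.range n, t (N + i) :=
        Finset.sum_range_add _ _ _
    _ ≤ G + G / (1 - b) := by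
        have h1 := hbefore N le_rfl
        have h2 := hsmall 0
        have h3 := htail n
        simp only [pow_zero, one_mul, add_zero] at h2
        linarith
    _ ≤ G + G / (1 - b) + 1 := by linarith

/-! ### The Hahn–Exton coefficients -/

/-- Coefficients of the Hahn–Exton series as a power series in `z ^ 2`. -/
noncomputable def heCoeff (ν q : ℝ) (k : ℕ) : ℝ :=
  (-1 : ℝ) ^ k * q ^ (k * (k + 1)) /
    (qPoch (q ^ (2 * (ν + 1))) (q ^ 2) k * qPoch (q ^ 2) (q ^ 2) k)

lemma qBessel_eq (ν q z : ℝ) : qBessel ν q z =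
    z ^ ν * (qPochInf (q ^ (2 * (ν + 1))) (q ^ 2) / qPochInf (q ^ 2) (q ^ 2)) *
      powSer (heCoeff ν q) (z ^ 2) := by
  unfold qBessel powSer heCoeff
  congr 1
  refine tsum_congr fun k => ?_
  rw [pow_mul z 2 k]
  ring

lemma heCoeff_rec {ν q : ℝ} (hq0 : 0 < q) (hq1 : q < 1) (hν : -1 < ν) (k : ℕ) :
    heCoeff ν q (k + 1) *
      ((1 - q ^ (2 * (ν + 1)) * (q ^ 2) ^ k) * (1 - q ^ 2 * (q ^ 2) ^ k))
      = -(q ^ 2 * (q ^ 2) ^ k) * heCoeff ν q k := by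
  have hp0 : 0 < q ^ 2 := by positivity
  have hp1 : q ^ 2 < 1 := by nlinarith
  have hb0 : 0 < q ^ (2 * (ν + 1)) := Real.rpow_pos_of_pos hq0 _
  have hb1 : q ^ (2 * (ν + 1)) < 1 := Real.rpow_lt_one hq0.le hq1 (by linarith)
  have e1 := (one_sub_mul_pow_pos hp0 hp1 hb0 hb1 k).ne'
  have e2 := (one_sub_mul_pow_pos hp0 hp1 hp0 hp1 k).ne'
  have e3 : qPoch (q ^ (2 * (ν + 1))) (q ^ 2) k ≠ 0 :=
    (Finset.prod_pos fun i _ => one_sub_mul_pow_pos hp0 hp1 hb0 hb1 i).ne'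
  have e4 : qPoch (q ^ 2) (q ^ 2) k ≠ 0 :=
    (Finset.prod_pos fun i _ => one_sub_mul_pow_pos hp0 hp1 hp0 hp1 i).ne'
  have s1 : qPoch (q ^ (2 * (ν + 1))) (q ^ 2) (k + 1) =
      qPoch (q ^ (2 * (ν + 1))) (q ^ 2) k * (1 - q ^ (2 * (ν + 1)) * (q ^ 2) ^ k) :=
    Finset.prod_range_succ _ _
  have s2 : qPoch (q ^ 2) (q ^ 2) (k + 1) =
      qPoch (q ^ 2) (q ^ 2) k * (1 - q ^ 2 * (q ^ 2) ^ k) :=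
    Finset.prod_range_succ _ _
  have s3 : q ^ ((k + 1) * (k + 1 + 1)) = q ^ (k * (k + 1)) * (q ^ 2 * (q ^ 2) ^ k) := by
    ring
  unfold heCoeff
  rw [s1, s2, s3, pow_succ (-1 : ℝ) k]
  generalize qPoch (q ^ (2 * (ν + 1))) (q ^ 2) k = P at *
  generalize qPoch (q ^ 2) (q ^ 2) k = Q at *
  generalize 1 - q ^ (2 * (ν + 1)) * (q ^ 2) ^ k = X at *
  generalize 1 - q ^ 2 * (q ^ 2) ^ k = Y at *
  field_simp

/-- If `φ` is bounded in the weighted sense of `weighted_sum_bound` along `(q ^ n * x) ^ 2`, then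
the q-integral of the square of `y ↦ y ^ ν * A * φ (y ^ 2)` at scale `q * x` is `O(x⁻²)`. -/
lemma qInt_bound {q ν A E x : ℝ} (hq0 : 0 < q) (hq1 : q < 1) (hx : 0 < x) {φ f : ℝ → ℝ}
    (hf : ∀ y, f y = y ^ ν * A * φ (y ^ 2))
    (hE : ∀ n : ℕ, ∑ i ∈ Finset.range n,
      ((q ^ 2) ^ i * x ^ 2) ^ (1 + ν) * φ ((q ^ 2) ^ i * x ^ 2) ^ 2 ≤ E) :
    0 ≤ qInt q (fun t => t * f (q * x * t) ^ 2) ∧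
      qInt q (fun t => t * f (q * x * t) ^ 2) ≤ A ^ 2 * E / (q ^ 2 * x ^ 2) := by
  have hterm : ∀ n : ℕ, q ^ n * f (q * x * q ^ n) ^ 2 * q ^ n = A ^ 2 / (q ^ 2 * x ^ 2) *
      (((q ^ 2) ^ (n + 1) * x ^ 2) ^ (1 + ν) * φ ((q ^ 2) ^ (n + 1) * x ^ 2) ^ 2) := by
    intro n
    have hy : 0 < q * x * q ^ n := by positivity
    have h1 : (q ^ 2) ^ (n + 1) * x ^ 2 = (q * x * q ^ n) ^ 2 := by ring
    rw [hf, h1]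
    have h2 : ((q * x * q ^ n) ^ 2) ^ (1 + ν) = (q * x * q ^ n) ^ 2 * ((q * x * q ^ n) ^ ν) ^ 2 := by
      rw [Real.rpow_add (by positivity), Real.rpow_one, ← Real.rpow_pow_comm hy.le]
    rw [h2]
    field_simp
  have hnn : ∀ n : ℕ, 0 ≤ q ^ n * f (q * x * q ^ n) ^ 2 * q ^ n := fun n => by positivity
  have h1q : 0 ≤ 1 - q := by linarith
  have hE0 : 0 ≤ E := by simpa using hE 0
  have htsum : ∑' n : ℕ, q ^ n * f (q * x * q ^ n) ^ 2 * q ^ n ≤ A ^ 2 * E / (q ^ 2 * x ^ 2) := by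
    refine Real.tsum_le_of_sum_range_le hnn fun n => ?_
    simp only [hterm]
    rw [← Finset.mul_sum, mul_div_right_comm]
    refine mul_le_mul_of_nonneg_left ?_ (by positivity)
    refine le_trans ?_ (hE (n + 1))
    rw [Finset.sum_range_succ']
    exact le_add_of_nonneg_right (by positivity)
  have h0 : 0 ≤ ∑' n : ℕ, q ^ n * f (q * x * q ^ n) ^ 2 * q ^ n := tsum_nonneg hnn
  unfold qInt
  refine ⟨mul_nonneg h1q h0, ?_⟩
  calc _ ≤ 1 * ∑' n : ℕ, q ^ n * f (q * x * q ^ n) ^ 2 * q ^ n :=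
        mul_le_mul_of_nonneg_right (by linarith) h0
    _ ≤ _ := by rw [one_mul]; exact htsum

theorem stmt13 (q ν : ℝ) (hq0 : 0 < q) (hq1 : q < 1) (hν : -1 < ν)
    (j : ℕ → ℝ)
    (hjpos : ∀ k, 1 ≤ k → 0 < j k)
    (hjzero : ∀ k, 1 ≤ k → qBessel ν q (j k) = 0)
    (hjmono : ∀ k, 1 ≤ k → j k < j (k + 1))
    (hjall : ∀ x, 0 < x → qBessel ν q x = 0 → ∃ k, 1 ≤ k ∧ x = j k)
    :
    ∃ C : ℝ, 0 < C ∧ ∃ M : ℕ, ∀ m, M ≤ m →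
      0 ≤ qInt q (fun t => t * qBessel ν q (q * j m * t) ^ 2) ∧
      qInt q (fun t => t * qBessel ν q (q * j m * t) ^ 2) ≤ C * q ^ (2 * m) := by
  set A := qPochInf (q ^ (2 * (ν + 1))) (q ^ 2) / qPochInf (q ^ 2) (q ^ 2) with hA
  set φ := powSer (heCoeff ν q) with hφdef
  have hJ : ∀ z, qBessel ν q z = z ^ ν * A * φ (z ^ 2) := fun z => qBessel_eq ν q z
  -- If the constant `A` vanished, `J_ν` would be identically zero and the bound trivial; this case
  -- split replaces a proof that the infinite products do not vanish.
  rcases eq_or_ne A 0 with hA0 | hA0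
  · refine ⟨1, one_pos, 0, fun m _ => ?_⟩
    have : qInt q (fun t => t * qBessel ν q (q * j m * t) ^ 2) = 0 := by
      simp [qInt, hJ, hA0]
    rw [this, one_mul]
    exact ⟨le_rfl, by positivity⟩
  have hp0 : 0 < q ^ 2 := by positivity
  have hp1 : q ^ 2 < 1 := by nlinarith
  set b := q ^ (2 * (ν + 1)) with hbdef
  have hb0 : 0 < b := Real.rpow_pos_of_pos hq0 _
  have hb1 : b < 1 := Real.rpow_lt_one hq0.le hq1 (by linarith)
  have hbp : b = (q ^ 2) ^ (1 + ν) := by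
    rw [hbdef, Real.rpow_mul hq0.le, add_comm ν 1, Real.rpow_two]
  set β := b / q ^ 2 with hβdef
  have hbβ : b = q ^ 2 * β := by rw [hβdef]; field_simp
  have hrec := heCoeff_rec hq0 hq1 hν
  have hc0 : heCoeff ν q 0 = 1 := by simp [heCoeff, qPoch]
  obtain ⟨hφ, hsum⟩ := powSer_entire hp0 hp1 hb0 hb1 hc0 hrec
  have hfe := powSer_functional_eq hbβ hrec hsum
  have hφ0 : φ 0 = 1 := by
    have h : φ 0 = ∑' k : ℕ, heCoeff ν q k * 0 ^ k := rfl
    rw [h, tsum_eq_single 0 (fun k hk => by simp [hk])]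
    simp [hc0]
  have hW := wronskian_neg hp0 hp1 hb0 hb1 hbβ hφ hφ0 hfe
  obtain ⟨E, hE0, hE⟩ := weighted_sum_bound hp0 hp1 hbp hν hbβ hφ.continuous hfe
  have hzero : ∀ x, 0 < x → (qBessel ν q x = 0 ↔ φ (x ^ 2) = 0) := by
    intro x hx
    rw [hJ x]
    simp [hA0, (Real.rpow_pos_of_pos hx ν).ne']
  have hgeom := zeros_geometric hp0 hφ hW (z := fun k => j (k + 1) ^ 2)
    (fun k => pow_pos (hjpos _ (Nat.le_add_left 1 k)) 2)
    (fun k => (hzero _ (hjpos _ (Nat.le_add_left 1 k))).1 (hjzero _ (Nat.le_add_left 1 k)))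
    (strictMono_nat_of_lt_succ fun k =>
      pow_lt_pow_left₀ (hjmono _ (Nat.le_add_left 1 k)) (hjpos _ (Nat.le_add_left 1 k)).le
        two_ne_zero)
    (fun x hx h0 => by
      have hs : √x ^ 2 = x := Real.sq_sqrt hx.le
      obtain ⟨k, hk, hxk⟩ := hjall (√x) (Real.sqrt_pos.2 hx)
        ((hzero _ (Real.sqrt_pos.2 hx)).2 (by rwa [hs]))
      refine ⟨k - 1, ?_⟩
      rw [Nat.sub_add_cancel hk, ← hxk, hs])
  have hj1 : 0 < j 1 := hjpos 1 le_rfl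
  -- `η_m ≤ A² E / (q² j_m²)` and `j_1² ≤ q^{2(m-1)} j_m²`.
  refine ⟨A ^ 2 * E / (q ^ 4 * j 1 ^ 2), by positivity, 1, fun m hm => ?_⟩
  have hjm := hjpos m hm
  obtain ⟨h0, h1⟩ := qInt_bound (A := A) hq0 hq1 hjm hJ
    (hE _ (pow_pos hjm 2) ((hzero _ hjm).1 (hjzero m hm)))
  refine ⟨h0, h1.trans ?_⟩
  have hg := hgeom (m - 1)
  simp only [zero_add, Nat.sub_add_cancel hm] at hg
  have hpow : q ^ (2 * m) = q ^ 2 * (q ^ 2) ^ (m - 1) := by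
    rw [← pow_succ', Nat.sub_add_cancel hm, pow_mul]
  rw [hpow, div_mul_eq_mul_div, div_le_div_iff₀ (by positivity) (by positivity)]
  have hcoef : 0 ≤ A ^ 2 * E * q ^ 4 := by positivity
  calc A ^ 2 * E * (q ^ 4 * j 1 ^ 2) = A ^ 2 * E * q ^ 4 * j 1 ^ 2 := by ring
    _ ≤ A ^ 2 * E * q ^ 4 * ((q ^ 2) ^ (m - 1) * j m ^ 2) := mul_le_mul_of_nonneg_left hg hcoef
    _ = _ := by ring
end

section
/- For every k = 1, 2, 3, …, the product J_ν(q·j_{kν};q²) · J_ν′(j_{kν};q²) is strictly negative. -/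
/-!
The left-hand side of the given norm identity is the Jackson integral of a nonnegative function,
that is, `(1 - q)` times the sum of `q ^ (2n) * J_ν(q ^ (n+1) * j_k) ^ 2`. On the right-hand side
the product in question is multiplied by the negative number `(q - 1) / (2 j_k) * q ^ (ν - 2)`,
so it suffices to show that the sum is strictly positive.

For this, write `J_ν(z) = z ^ ν * C * S(z)`, where `C` is a quotient of convergent infinite products
without vanishing factors (`qPochInf_ne_zero`), and `S` is the power series. As `S(0) = 1`, for small
`z` one has `|S(z) - 1| ≤ 1/3` (`abs_qBesselSeries_sub_one_le`). Hence the terms with large `n` are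
nonzero, and they are dominated by a multiple of `q ^ (2 (ν + 1) n)`, which is summable because
`ν > -1`; summability is needed since a divergent `tsum` would be zero.
-/

open Filter

/-- The power series factor `S(z)` of the Hahn–Exton function, normalised by `S(0) = 1`. -/
noncomputable def qBesselSeries (ν q z : ℝ) : ℝ :=
  ∑' k : ℕ, ((-1 : ℝ) ^ k * q ^ (k * (k + 1)) * z ^ (2 * k) /
      (qPoch (q ^ (2 * (ν + 1))) (q ^ 2) k * qPoch (q ^ 2) (q ^ 2) k))

lemma pow_le_qPoch {a p : ℝ} (ha0 : 0 < a) (ha1 : a < 1) (hp0 : 0 < p) (hp1 : p < 1) (n : ℕ) :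
    (1 - a) ^ n ≤ qPoch a p n := by
  have h : ∏ _j ∈ Finset.range n, (1 - a) ≤ qPoch a p n := by
    refine Finset.prod_le_prod (fun _ _ => by linarith) fun i _ => ?_
    have := mul_le_of_le_one_right ha0.le (pow_le_one₀ hp0.le hp1.le : p ^ i ≤ 1)
    linarith
  simpa using h

lemma qPochInf_ne_zero {a p : ℝ} (ha0 : 0 < a) (ha1 : a < 1) (hp0 : 0 < p) (hp1 : p < 1) :
    qPochInf a p ≠ 0 := by
  have h := tprod_one_add_ne_zero_of_summable (f := fun j : ℕ => -(a * p ^ j)) (fun i => by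
      have := mul_le_of_le_one_right ha0.le (pow_le_one₀ hp0.le hp1.le : p ^ i ≤ 1)
      have : 0 < 1 + -(a * p ^ i) := by linarith
      exact this.ne')
    (((summable_geometric_of_lt_one hp0.le hp1).mul_left a).neg.norm)
  simpa [qPochInf, sub_eq_add_neg] using h

/-- Near the origin the series is dominated, after its constant term `1`, by `∑ (1/4) ^ (k + 1)`,
whose value is `1/3`. -/
lemma abs_qBesselSeries_sub_one_le {q ν : ℝ} (hq0 : 0 < q) (hq1 : q < 1) (hν : -1 < ν) :
    ∃ δ > 0, ∀ z : ℝ, z ^ 2 ≤ δ → |qBesselSeries ν q z - 1| ≤ 1 / 3 := by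
  have ha0 : 0 < q ^ (2 * (ν + 1)) := Real.rpow_pos_of_pos hq0 _
  have ha1 : q ^ (2 * (ν + 1)) < 1 := Real.rpow_lt_one hq0.le hq1 (by linarith)
  have hp0 : 0 < q ^ 2 := by positivity
  have hp1 : q ^ 2 < 1 := pow_lt_one₀ hq0.le hq1 (by norm_num)
  set a := q ^ (2 * (ν + 1))
  have hA : 0 < 1 - a := by linarith
  have hP : 0 < 1 - q ^ 2 := by linarith
  refine ⟨(1 - a) * (1 - q ^ 2) / 4, by positivity, fun z hz => ?_⟩
  set f : ℕ → ℝ := fun k => (-1 : ℝ) ^ k * q ^ (k * (k + 1)) * z ^ (2 * k) /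
      (qPoch a (q ^ 2) k * qPoch (q ^ 2) (q ^ 2) k) with hf
  have hbound : ∀ k, ‖f k‖ ≤ (1 / 4 : ℝ) ^ k := by
    intro k
    have h1 := pow_le_qPoch ha0 ha1 hp0 hp1 k
    have h2 := pow_le_qPoch hp0 hp1 hp0 hp1 k
    have h1' : 0 < (1 - a) ^ k := by positivity
    have h2' : 0 < (1 - q ^ 2) ^ k := by positivity
    have hd : (1 - a) ^ k * (1 - q ^ 2) ^ k ≤ qPoch a (q ^ 2) k * qPoch (q ^ 2) (q ^ 2) k :=
      mul_le_mul h1 h2 h2'.le (h1'.le.trans h1)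
    have hd0 : 0 < qPoch a (q ^ 2) k * qPoch (q ^ 2) (q ^ 2) k := (mul_pos h1' h2').trans_le hd
    have hz' : (z ^ 2) ^ k ≤ ((1 - a) * (1 - q ^ 2) / 4) ^ k := pow_le_pow_left₀ (sq_nonneg z) hz k
    have hqk : q ^ (k * (k + 1)) ≤ 1 := pow_le_one₀ hq0.le hq1.le
    have hnorm : ‖f k‖ = q ^ (k * (k + 1)) * (z ^ 2) ^ k /
        (qPoch a (q ^ 2) k * qPoch (q ^ 2) (q ^ 2) k) := by
      simp only [hf, Real.norm_eq_abs]
      rw [abs_div, abs_of_pos hd0, abs_mul, abs_mul, abs_pow, abs_neg, abs_one, one_pow, one_mul,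
        abs_of_pos (pow_pos hq0 _), pow_mul z, abs_of_nonneg (pow_nonneg (sq_nonneg z) k)]
    rw [hnorm, div_le_iff₀ hd0]
    calc q ^ (k * (k + 1)) * (z ^ 2) ^ k ≤ 1 * ((1 - a) * (1 - q ^ 2) / 4) ^ k :=
          mul_le_mul hqk hz' (by positivity) zero_le_one
      _ = (1 / 4) ^ k * ((1 - a) ^ k * (1 - q ^ 2) ^ k) := by
          rw [← mul_pow, ← mul_pow]; ring
      _ ≤ _ := by gcongr
  have hg : HasSum (fun k : ℕ => (1 / 4 : ℝ) ^ (k + 1)) (1 / 3) := by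
    have h := (hasSum_geometric_of_lt_one (r := (1 / 4 : ℝ)) (by norm_num) (by norm_num)).mul_left
      (1 / 4)
    have hval : (1 / 4 : ℝ) * (1 - 1 / 4)⁻¹ = 1 / 3 := by norm_num
    rw [hval] at h
    simpa only [pow_succ'] using h
  have hs : Summable f := .of_norm_bounded
    (summable_geometric_of_lt_one (by norm_num) (by norm_num)) hbound
  have hsum : qBesselSeries ν q z = f 0 + ∑' k, f (k + 1) := hs.tsum_eq_zero_add
  have hf0 : f 0 = 1 := by simp [hf, qPoch]
  rw [hsum, hf0, add_sub_cancel_left]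
  exact tsum_of_norm_bounded hg fun k => hbound (k + 1)

/-- The Jackson integral of `t * J_ν(x t) ^ 2` over `[0, 1]` is strictly positive for `x > 0`. -/
lemma qInt_qBessel_sq_pos {q ν x : ℝ} (hq0 : 0 < q) (hq1 : q < 1) (hν : -1 < ν) (hx : 0 < x) :
    0 < qInt q (fun t => t * qBessel ν q (x * t) ^ 2) := by
  have ha0 : 0 < q ^ (2 * (ν + 1)) := Real.rpow_pos_of_pos hq0 _
  have ha1 : q ^ (2 * (ν + 1)) < 1 := Real.rpow_lt_one hq0.le hq1 (by linarith)
  have hp0 : 0 < q ^ 2 := by positivity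
  have hp1 : q ^ 2 < 1 := pow_lt_one₀ hq0.le hq1 (by norm_num)
  obtain ⟨δ, hδ, hS⟩ := abs_qBesselSeries_sub_one_le hq0 hq1 hν
  set C := qPochInf (q ^ (2 * (ν + 1))) (q ^ 2) / qPochInf (q ^ 2) (q ^ 2) with hC
  have hC0 : C ≠ 0 :=
    div_ne_zero (qPochInf_ne_zero ha0 ha1 hp0 hp1) (qPochInf_ne_zero hp0 hp1 hp0 hp1)
  have hterm : ∀ n : ℕ, q ^ n * qBessel ν q (x * q ^ n) ^ 2 * q ^ n =
      (x ^ ν * C) ^ 2 * qBesselSeries ν q (x * q ^ n) ^ 2 * (q ^ (2 * (ν + 1))) ^ n := by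
    intro n
    have hJ : qBessel ν q (x * q ^ n) =
        (x * q ^ n) ^ ν * C * qBesselSeries ν q (x * q ^ n) := rfl
    have hpow : (q ^ (2 * (ν + 1))) ^ n = q ^ n * q ^ n * ((q ^ n) ^ ν) ^ 2 := by
      rw [show 2 * (ν + 1) = ((2 : ℕ) : ℝ) + ν * ((2 : ℕ) : ℝ) by push_cast; ring,
        Real.rpow_add hq0, Real.rpow_natCast, Real.rpow_mul_natCast hq0.le,
        ← Real.rpow_pow_comm hq0.le]
      ring
    rw [hJ, hpow, Real.mul_rpow hx.le (by positivity)]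
    ring
  have hsmall : ∀ᶠ n : ℕ in atTop, |qBesselSeries ν q (x * q ^ n) - 1| ≤ 1 / 3 := by
    have ht : Tendsto (fun n : ℕ => (x * q ^ n) ^ 2) atTop (nhds 0) := by
      simpa using (((tendsto_pow_atTop_nhds_zero_of_lt_one hq0.le hq1).const_mul x).pow 2)
    filter_upwards [ht.eventually_le_const hδ] with n hn
    exact hS _ hn
  have hnn : ∀ n : ℕ, 0 ≤ q ^ n * qBessel ν q (x * q ^ n) ^ 2 * q ^ n := fun n => by positivity
  have hsum : Summable fun n : ℕ => q ^ n * qBessel ν q (x * q ^ n) ^ 2 * q ^ n := by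
    refine .of_norm_bounded_eventually_nat
      ((summable_geometric_of_lt_one ha0.le ha1).mul_left ((x ^ ν * C) ^ 2 * 2)) ?_
    filter_upwards [hsmall] with n hn
    rw [Real.norm_of_nonneg (hnn n), hterm n]
    have h2 : qBesselSeries ν q (x * q ^ n) ^ 2 ≤ 2 := by
      obtain ⟨h1, h2⟩ := abs_le.1 hn
      nlinarith
    gcongr
  obtain ⟨n, hn⟩ := hsmall.exists
  refine mul_pos (by linarith) (hsum.tsum_pos hnn n ?_)
  rw [hterm n]
  have hS0 : 0 < qBesselSeries ν q (x * q ^ n) := by linarith [(abs_le.1 hn).1]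
  have hxν : 0 < x ^ ν := Real.rpow_pos_of_pos hx ν
  positivity


theorem stmt16 (q ν : ℝ) (hq0 : 0 < q) (hq1 : q < 1) (hν : -1 < ν)
    (j : ℕ → ℝ)
    (hjpos : ∀ k, 1 ≤ k → 0 < j k)
    (hjzero : ∀ k, 1 ≤ k → qBessel ν q (j k) = 0)
    (hjmono : ∀ k, 1 ≤ k → j k < j (k + 1))
    (hjall : ∀ x, 0 < x → qBessel ν q x = 0 → ∃ k, 1 ≤ k ∧ x = j k)
    (heta : ∀ k, 1 ≤ k →
      qInt q (fun t => t * qBessel ν q (q * j k * t) ^ 2) =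
        (q - 1) / (2 * j k) * q ^ (ν - 2) * qBessel ν q (q * j k) *
          deriv (qBessel ν q) (j k)) :
    ∀ k, 1 ≤ k → qBessel ν q (q * j k) * deriv (qBessel ν q) (j k) < 0 := by
  intro k hk
  have hj := hjpos k hk
  have hpos := qInt_qBessel_sq_pos hq0 hq1 hν (mul_pos hq0 hj)
  rw [heta k hk, mul_assoc] at hpos
  have hneg : (q - 1) / (2 * j k) * q ^ (ν - 2) < 0 :=
    mul_neg_of_neg_of_pos (div_neg_of_neg_of_pos (by linarith) (by positivity))
      (Real.rpow_pos_of_pos hq0 _)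
  exact neg_of_mul_pos_right hpos hneg.le
end
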